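/- arXiv:1902.08162 — 3 statements merged into one kernel-verified Lean document; each statement's English description precedes it below -/
import Mathlib

section
/- For every x in [-1,1], 2 times the integral over s in (-1,1) of log|x-s| · (1/π) sqrt((1-s)/(1+s)) ds equals 2(x+1) - (2 + 2 log 2). (Equivalently, the measure with density (1/π) sqrt((1-s)/(1+s)) on [-1,1] is the equilibrium measure for the Laguerre-type potential V(x) = 2(x+1), with Euler–Lagrange constant ℓ = 2 + 2 log 2.) -/
open MeasureTheory Filter Set

/-!
Substituting `s = cos θ` turns the weight `√((1 - s) / (1 + s)) ds` into `(1 - cos θ) dθ`. With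
`x = cos φ`, the kernel splits as
`log |cos φ - cos θ| = g (θ + φ) + g (θ - φ) - log 2`, where `g t = log |2 sin (t / 2)|`, so
integrating it against `cos (n θ)` over `[0, π]` amounts to convolving the even function `g` with
`cos (n ·)` over a full period. Hence `cos (n ·)` is an eigenfunction of the logarithmic kernel, and
its eigenvalue is read off from the `n`-th Fourier coefficient of `g`, which is `0` for `n = 0` and
`-π / n` otherwise. The theorem combines the cases `n = 0` and `n = 1`.
-/

section

open Real Polynomial.Chebyshev

section SymmetricIntervals

variable {E : Type*} [NormedAddCommGroup E] [NormedSpace ℝ E] {f : ℝ → E}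

lemma intervalIntegral_neg_self_of_odd (hf : f.Odd) (a : ℝ) : ∫ t in -a..a, f t = 0 := by
  have h : ∫ t in -a..a, f t = -∫ t in -a..a, f t := by
    simpa only [hf.eq, intervalIntegral.integral_neg, neg_neg] using
      (intervalIntegral.integral_comp_neg (a := -a) (b := a) f).symm
  have : IsAddTorsionFree E := .of_isTorsionFree ℝ E
  exact self_eq_neg.mp h

lemma intervalIntegral_add_comp_neg {a : ℝ} (hf : IntervalIntegrable f volume (-a) a) :
    ∫ t in 0..a, (f t + f (-t)) = ∫ t in -a..a, f t := by
  have h0 : (0 : ℝ) ∈ uIcc (-a) a := by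
    rcases le_total 0 a with ha | ha <;> simp [ha]
  have hneg : IntervalIntegrable f volume (-a) 0 := hf.mono_set (uIcc_subset_uIcc_left h0)
  have hpos : IntervalIntegrable f volume 0 a := hf.mono_set (uIcc_subset_uIcc_right h0)
  have hcomp : IntervalIntegrable (fun t ↦ f (-t)) volume 0 a := by
    simpa using (IntervalIntegrable.iff_comp_neg).mp hneg.symm
  rw [intervalIntegral.integral_add hpos hcomp, intervalIntegral.integral_comp_neg, neg_zero,
    add_comm, intervalIntegral.integral_add_adjacent_intervals hneg hpos]

end SymmetricIntervals

lemma periodic_cos_int_mul (n : ℤ) : Function.Periodic (fun t : ℝ ↦ cos (n * t)) (2 * π) :=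
  fun t ↦ by simp only [mul_add, cos_add_int_mul_two_pi]

lemma integral_comp_add_right_mul_cos_of_even {f : ℝ → ℝ} (heven : f.Even)
    (hper : f.Periodic (2 * π)) (hf : IntervalIntegrable f volume (-π) π) (n : ℤ) (φ : ℝ) :
    ∫ t in -π..π, f (t + φ) * cos (n * t) = cos (n * φ) * ∫ t in -π..π, f t * cos (n * t) := by
  have hper' : Function.Periodic (fun u ↦ f u * cos (n * (u - φ))) (2 * π) :=
    hper.mul ((periodic_cos_int_mul n).sub_const φ)
  have hodd : Function.Odd fun u ↦ f u * sin (n * u) := fun u ↦ by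
    simp only [heven.eq, mul_neg, sin_neg]
  have hcos : IntervalIntegrable (fun u ↦ f u * cos (n * u)) volume (-π) π :=
    hf.mul_continuousOn (by fun_prop)
  have hsin : IntervalIntegrable (fun u ↦ f u * sin (n * u)) volume (-π) π :=
    hf.mul_continuousOn (by fun_prop)
  calc ∫ t in -π..π, f (t + φ) * cos (n * t)
      = ∫ u in -π + φ..π + φ, f u * cos (n * (u - φ)) := by
        simpa using intervalIntegral.integral_comp_add_right (a := -π) (b := π)
          (fun u ↦ f u * cos (n * (u - φ))) φ
    _ = ∫ u in -π..π, f u * cos (n * (u - φ)) := by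
        convert hper'.intervalIntegral_add_eq (-π + φ) (-π) using 2 <;> ring
    _ = ∫ u in -π..π, (cos (n * φ) * (f u * cos (n * u)) + sin (n * φ) * (f u * sin (n * u))) := by
        congr with u
        rw [mul_sub, cos_sub]
        ring
    _ = cos (n * φ) * ∫ t in -π..π, f t * cos (n * t) := by
        rw [intervalIntegral.integral_add (hcos.const_mul _) (hsin.const_mul _),
          intervalIntegral.integral_const_mul, intervalIntegral.integral_const_mul,
          intervalIntegral_neg_self_of_odd hodd, mul_zero, add_zero]

lemma sin_half_pos {t : ℝ} (ht : t ∈ Ioo 0 (2 * π)) : 0 < sin (t / 2) :=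
  sin_pos_of_pos_of_lt_pi (by linarith [ht.1]) (by linarith [ht.2])

lemma ae_cos_ne (c : ℝ) : ∀ᵐ t : ℝ, cos t ≠ c := by
  rcases em (∃ φ, cos φ = c) with ⟨φ, rfl⟩ | hc
  · have h : {t | cos t = cos φ} ⊆ ⋃ k : ℤ, {2 * k * π + φ, 2 * k * π - φ} := fun t ht ↦
      mem_iUnion.mpr (cos_eq_cos_iff.mp (Eq.symm ht))
    exact ((countable_iUnion fun k ↦ by simp).mono h).ae_notMem volume
  · exact .of_forall fun t ht ↦ hc ⟨t, ht⟩

lemma sin_int_mul_eq_eval_U (n : ℤ) (t : ℝ) :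
    sin (n * t) = 2 * sin (t / 2) * cos (t / 2) * (U ℝ (n - 1)).eval (cos t) := by
  have h := U_real_cos t (n - 1)
  rw [Int.cast_sub, Int.cast_one, sub_add_cancel] at h
  rw [← h, ← sin_two_mul, mul_div_cancel₀ t two_ne_zero, mul_comm]

lemma integral_cos_int_mul {n : ℤ} (hn : n ≠ 0) : ∫ t in 0..2 * π, cos (n * t) = 0 := by
  have hsin : sin (n * (2 * π)) = 0 := by simpa using sin_add_int_mul_two_pi 0 n
  rw [intervalIntegral.integral_comp_mul_left _ (Int.cast_ne_zero.mpr hn), integral_cos, hsin]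
  simp

lemma one_add_X_mul_U_add_one (R : Type*) [CommRing R] (n : ℤ) :
    (1 + Polynomial.X) * U R (n + 1) =
      (1 + Polynomial.X) * U R n + (T R (n + 1) + T R (n + 2)) := by
  linear_combination U_eq_X_mul_U_add_T R n - T_eq_X_mul_U_sub_U R n

lemma integral_one_add_cos_mul_U (n : ℕ) :
    ∫ t in 0..2 * π, (1 + cos t) * (U ℝ n).eval (cos t) = 2 * π := by
  induction n with
  | zero => simp
  | succ n ih =>
    have hrec (t : ℝ) : (1 + cos t) * (U ℝ (n + 1 : ℕ)).eval (cos t) =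
        (1 + cos t) * (U ℝ n).eval (cos t) +
          (cos ((n + 1 : ℤ) * t) + cos ((n + 2 : ℤ) * t)) := by
      have h := congrArg (Polynomial.eval (cos t)) (one_add_X_mul_U_add_one ℝ n)
      simpa only [Polynomial.eval_mul, Polynomial.eval_add, Polynomial.eval_one,
        Polynomial.eval_X, T_real_cos, Nat.cast_succ] using h
    simp only [hrec]
    rw [intervalIntegral.integral_add, intervalIntegral.integral_add, ih,
      integral_cos_int_mul (by lia), integral_cos_int_mul (by lia), add_zero, add_zero]
    all_goals exact Continuous.intervalIntegrable (by fun_prop) _ _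

/-- The logarithm of the chord length `|1 - e^{it}| = 2 |sin (t / 2)|`; the absolute value is
implicit in `Real.log`. -/
noncomputable def logChord (t : ℝ) : ℝ := log (2 * sin (t / 2))

namespace logChord

lemma even : logChord.Even := fun t ↦ by
  simp only [logChord, neg_div, sin_neg, mul_neg, log_neg_eq_log]

lemma periodic : logChord.Periodic (2 * π) := fun t ↦ by
  have h : (t + 2 * π) / 2 = t / 2 + π := by ring
  simp only [logChord, h, sin_add_pi, mul_neg, log_neg_eq_log]

lemma intervalIntegrable (a b : ℝ) : IntervalIntegrable logChord volume a b := by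
  have h : AnalyticOnNhd ℝ (fun t : ℝ ↦ 2 * sin (t / 2)) (uIcc a b) := fun t _ ↦ by fun_prop
  exact h.meromorphicOn.intervalIntegrable_log

lemma intervalIntegrable_comp_add_right (φ a b : ℝ) :
    IntervalIntegrable (fun t ↦ logChord (t + φ)) volume a b := by
  simpa using (intervalIntegrable (a + φ) (b + φ)).comp_add_right φ

lemma integral_eq_zero : ∫ t in 0..2 * π, logChord t = 0 := by
  have hsin : ∫ t in 0..2 * π, log (sin (t / 2)) = -(2 * π * log 2) := by
    rw [intervalIntegral.integral_comp_div (fun t ↦ log (sin t)) two_ne_zero, zero_div,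
      mul_div_cancel_left₀ _ two_ne_zero, integral_log_sin_zero_pi, smul_eq_mul]
    ring
  have hlog : ∫ t in 0..2 * π, log (sin (t / 2)) = ∫ t in 0..2 * π, (logChord t - log 2) := by
    refine intervalIntegral.integral_congr_Ioo_of_le two_pi_pos.le fun t ht ↦ ?_
    simp only [logChord]
    rw [log_mul two_ne_zero (sin_half_pos ht).ne', add_sub_cancel_left]
  rw [hsin, intervalIntegral.integral_sub (intervalIntegrable _ _) (by simp),
    intervalIntegral.integral_const, smul_eq_mul] at hlog
  linarith

lemma hasDerivAt {t : ℝ} (ht : sin (t / 2) ≠ 0) :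
    HasDerivAt logChord (cos (t / 2) / (2 * sin (t / 2))) t := by
  have h := (((hasDerivAt_id t).div_const 2).sin.const_mul 2).log (mul_ne_zero two_ne_zero ht)
  exact h.congr_deriv (by simp only [id]; ring)

-- The zeros of `sin (n t)` absorb the logarithmic singularities, so that integration by parts over
-- a full period leaves no boundary terms.
lemma continuous_sin_int_mul_mul (n : ℤ) : Continuous fun t ↦ sin (n * t) * logChord t := by
  have hlog : Continuous fun t : ℝ ↦ 2 * sin (t / 2) * log (2 * sin (t / 2)) :=
    continuous_mul_log.comp (by fun_prop)
  have heq : (fun t ↦ sin (n * t) * logChord t) = fun t ↦ (U ℝ (n - 1)).eval (cos t) *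
      cos (t / 2) * (2 * sin (t / 2) * log (2 * sin (t / 2))) := by
    ext t
    rw [sin_int_mul_eq_eval_U, logChord]
    ring
  rw [heq]
  exact Continuous.mul (by fun_prop) hlog

lemma hasDerivAt_sin_int_mul_mul (n : ℤ) {t : ℝ} (ht : sin (t / 2) ≠ 0) :
    HasDerivAt (fun t ↦ sin (n * t) * logChord t)
      (n * (logChord t * cos (n * t)) + (1 + cos t) * (U ℝ (n - 1)).eval (cos t) / 2) t := by
  have h := (((hasDerivAt_id t).const_mul (n : ℝ)).sin).mul (logChord.hasDerivAt ht)
  refine h.congr_deriv ?_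
  have hcos : cos t = 2 * cos (t / 2) ^ 2 - 1 := by
    rw [← cos_two_mul, mul_div_cancel₀ t two_ne_zero]
  simp only [id]
  rw [sin_int_mul_eq_eval_U]
  field_simp
  linear_combination (-(U ℝ (n - 1)).eval (cos t)) * hcos

lemma integral_mul_cos_of_ne_zero {n : ℕ} (hn : n ≠ 0) :
    ∫ t in 0..2 * π, logChord t * cos (n * t) = -π / n := by
  have hcos : IntervalIntegrable (fun t ↦ logChord t * cos (n * t)) volume 0 (2 * π) :=
    (intervalIntegrable _ _).mul_continuousOn (by fun_prop)
  have hU : IntervalIntegrable (fun t ↦ (1 + cos t) * (U ℝ (n - 1)).eval (cos t) / 2)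
      volume 0 (2 * π) := Continuous.intervalIntegrable (by fun_prop) _ _
  have hintU : ∫ t in 0..2 * π, (1 + cos t) * (U ℝ (n - 1)).eval (cos t) = 2 * π := by
    simpa [Nat.cast_sub (Nat.one_le_iff_ne_zero.mpr hn)] using integral_one_add_cos_mul_U (n - 1)
  have hsin : sin (n * (2 * π)) = 0 := by simpa using sin_add_nat_mul_two_pi 0 n
  have hFTC : ∫ t in 0..2 * π, (n * (logChord t * cos (n * t)) +
      (1 + cos t) * (U ℝ (n - 1)).eval (cos t) / 2) = 0 := by
    simpa [hsin] using intervalIntegral.integral_eq_sub_of_hasDerivAt_of_le two_pi_pos.le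
      (continuous_sin_int_mul_mul n).continuousOn
      (fun t ht ↦ hasDerivAt_sin_int_mul_mul n (sin_half_pos ht).ne')
      ((hcos.const_mul _).add hU)
  rw [intervalIntegral.integral_add (hcos.const_mul _) hU, intervalIntegral.integral_const_mul,
    intervalIntegral.integral_div, hintU] at hFTC
  field_simp at hFTC ⊢
  linarith

end logChord

lemma log_abs_cos_sub_cos {φ t : ℝ} (h : cos t ≠ cos φ) :
    log |cos φ - cos t| = logChord (t + φ) + logChord (t - φ) - log 2 := by
  have hfactor : cos φ - cos t = 2 * sin ((t + φ) / 2) * sin ((t - φ) / 2) := by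
    rw [← neg_sub, cos_sub_cos]
    ring
  have hne : 2 * sin ((t + φ) / 2) * sin ((t - φ) / 2) ≠ 0 := hfactor ▸ sub_ne_zero.mpr h.symm
  obtain ⟨hadd, hsub⟩ := mul_ne_zero_iff.mp hne
  rw [log_abs, hfactor, log_mul hadd hsub, logChord, logChord, log_mul two_ne_zero hsub]
  ring

lemma intervalIntegrable_log_abs_cos_sub_cos (φ a b : ℝ) :
    IntervalIntegrable (fun t ↦ log |cos φ - cos t|) volume a b := by
  have h : AnalyticOnNhd ℝ (fun t : ℝ ↦ cos φ - cos t) (uIcc a b) := fun t _ ↦ by fun_prop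
  exact h.meromorphicOn.intervalIntegrable_log_norm

lemma integral_log_abs_cos_sub_cos_mul_cos_eq_integral_logChord (φ : ℝ) (n : ℤ) :
    ∫ t in 0..π, log |cos φ - cos t| * cos (n * t) =
      (∫ t in -π..π, logChord (t + φ) * cos (n * t)) - log 2 * ∫ t in 0..π, cos (n * t) := by
  set f : ℝ → ℝ := fun t ↦ logChord (t + φ) * cos (n * t)
  have hf (a b : ℝ) : IntervalIntegrable f volume a b :=
    (logChord.intervalIntegrable_comp_add_right φ a b).mul_continuousOn (by fun_prop)
  have hf_neg (t : ℝ) : f (-t) = logChord (t - φ) * cos (n * t) := by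
    simp only [f, mul_neg, cos_neg, ← logChord.even (t - φ), neg_sub, neg_add_eq_sub]
  have hf_comp_neg : IntervalIntegrable (fun t ↦ f (-t)) volume 0 π := by
    simpa using (IntervalIntegrable.iff_comp_neg).mp (hf (-0) (-π))
  calc ∫ t in 0..π, log |cos φ - cos t| * cos (n * t)
      = ∫ t in 0..π, (f t + f (-t) - log 2 * cos (n * t)) := by
        refine intervalIntegral.integral_congr_ae ?_
        filter_upwards [ae_cos_ne (cos φ)] with t ht _
        rw [log_abs_cos_sub_cos ht, hf_neg]
        ring
    _ = (∫ t in -π..π, f t) - log 2 * ∫ t in 0..π, cos (n * t) := by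
        rw [intervalIntegral.integral_sub ((hf 0 π).add hf_comp_neg)
            (Continuous.intervalIntegrable (by fun_prop) _ _),
          intervalIntegral.integral_const_mul, intervalIntegral_add_comp_neg (hf _ _)]

lemma integral_log_abs_cos_sub_cos_mul_cos_int_mul (φ : ℝ) (n : ℤ) :
    ∫ t in 0..π, log |cos φ - cos t| * cos (n * t) =
      cos (n * φ) * (∫ t in 0..2 * π, logChord t * cos (n * t)) -
        log 2 * ∫ t in 0..π, cos (n * t) := by
  have hshift : ∫ t in -π..π, logChord t * cos (n * t) =
      ∫ t in 0..2 * π, logChord t * cos (n * t) := by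
    have hper : Function.Periodic (fun t ↦ logChord t * cos (n * t)) (2 * π) :=
      logChord.periodic.mul (periodic_cos_int_mul n)
    convert hper.intervalIntegral_add_eq (-π) 0 using 2 <;> ring
  rw [integral_log_abs_cos_sub_cos_mul_cos_eq_integral_logChord,
    integral_comp_add_right_mul_cos_of_even logChord.even logChord.periodic
      (logChord.intervalIntegrable _ _), hshift]

lemma integral_log_abs_cos_sub_cos (φ : ℝ) :
    ∫ t in 0..π, log |cos φ - cos t| = -log 2 * π := by
  simpa [logChord.integral_eq_zero] using integral_log_abs_cos_sub_cos_mul_cos_int_mul φ 0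

lemma integral_log_abs_cos_sub_cos_mul_cos {n : ℕ} (hn : n ≠ 0) (φ : ℝ) :
    ∫ t in 0..π, log |cos φ - cos t| * cos (n * t) = -π / n * cos (n * φ) := by
  have hcos : ∫ t in 0..π, cos (n * t) = 0 := by
    simp [sin_nat_mul_pi, intervalIntegral.integral_comp_mul_left, hn]
  have h := integral_log_abs_cos_sub_cos_mul_cos_int_mul φ n
  simp only [Int.cast_natCast] at h
  rw [h, hcos, logChord.integral_mul_cos_of_ne_zero hn]
  ring

lemma integral_mul_sqrt_one_sub_div_one_add (f : ℝ → ℝ) :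
    ∫ s in Ioo (-1) 1, f s * √((1 - s) / (1 + s)) = ∫ θ in 0..π, f (cos θ) * (1 - cos θ) := by
  have hweight : ∀ s ∈ Ioo (-1 : ℝ) 1, √((1 - s) / (1 + s)) = (1 - s) * √(1 - s ^ 2)⁻¹ := by
    intro s hs
    have hsub : 0 < 1 - s := sub_pos.mpr hs.2
    have hadd : 0 < 1 + s := by linarith [hs.1]
    have hsq : (1 - s) / (1 + s) = (1 - s) ^ 2 * (1 - s ^ 2)⁻¹ := by
      rw [show 1 - s ^ 2 = (1 - s) * (1 + s) by ring]
      field_simp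
    rw [hsq, sqrt_mul (sq_nonneg _), sqrt_sq hsub.le]
  calc ∫ s in Ioo (-1) 1, f s * √((1 - s) / (1 + s))
      = ∫ s in Ioo (-1) 1, f s * (1 - s) * √(1 - s ^ 2)⁻¹ :=
        setIntegral_congr_fun measurableSet_Ioo fun s hs ↦ by
          simp only [hweight s hs, mul_assoc]
    _ = ∫ s, f s * (1 - s) ∂measureT := by
        rw [integral_measureT, intervalIntegral.integral_of_le (by norm_num),
          integral_Ioc_eq_integral_Ioo]
    _ = ∫ θ in 0..π, f (cos θ) * (1 - cos θ) := integral_measureT_eq_integral_cos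

end

/-- The measure with density `(1/π) sqrt((1-s)/(1+s))` on `[-1,1]` is the
equilibrium measure for the Laguerre-type potential `V(x) = 2(x+1)`: for every
`x ∈ [-1,1]`, `2 ∫ log|x-s| dμ(s) = V(x) - ℓ` with `ℓ = 2 + 2 log 2`. -/
theorem laguerre_equilibrium_equality (x : ℝ) (hx : x ∈ Set.Icc (-1 : ℝ) 1) :
    2 * ∫ s in Set.Ioo (-1 : ℝ) 1,
        Real.log |x - s| * ((1 / Real.pi) * Real.sqrt ((1 - s) / (1 + s)))
      = 2 * (x + 1) - (2 + 2 * Real.log 2) := by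
  obtain ⟨φ, -, rfl⟩ := Real.surjOn_cos hx
  have hlog := intervalIntegrable_log_abs_cos_sub_cos φ 0 Real.pi
  have hlogcos : IntervalIntegrable (fun t ↦ Real.log |Real.cos φ - Real.cos t| * Real.cos t)
      volume 0 Real.pi := hlog.mul_continuousOn (by fun_prop)
  have hone := integral_log_abs_cos_sub_cos_mul_cos one_ne_zero φ
  simp only [Nat.cast_one, one_mul, div_one] at hone
  simp only [mul_left_comm _ (1 / Real.pi)]
  rw [integral_const_mul,
    integral_mul_sqrt_one_sub_div_one_add (fun s ↦ Real.log |Real.cos φ - s|)]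
  simp only [mul_sub, mul_one]
  rw [intervalIntegral.integral_sub hlog hlogcos, integral_log_abs_cos_sub_cos, hone]
  field_simp
  ring
end

section
/- Let V be a real-valued continuously differentiable function on a neighborhood of [-1,1] and suppose ρ is a continuous probability density on [-1,1] such that for all z in ℂ \ [-1,1], 2π sqrt(z-1) sqrt(z+1) ∫_{-1}^{1} ρ(x)/(x-z) dx + ∫_{-1}^{1} V'(x) sqrt(1-x^2)/(x-z) dx = -2π (with principal branches of the square roots). Then for every t in (-1,1), the principal value integral ⨍_{-1}^{1} V'(x) sqrt(1-x^2)/(x-t) dx equals -2π + 2π^2 sqrt(1-t^2) ρ(t). -/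
open MeasureTheory Filter Set

/-!
At `z = t + iη` the Cauchy kernel `1 / (x - z)` is the rescaling `η⁻¹ (v - i)⁻¹`, `v = (x - t) / η`.
Its imaginary part is the Poisson kernel, an approximate identity of mass `π`. Its real part differs
from the kernel of the integral truncated to `η ≤ |x - t|` by the rescaling of an odd kernel
dominated by `(1 + v²)⁻¹`, so as `η → 0` the real part of a Cauchy transform has the same limit as
the truncated integrals.

It remains to take real parts in the equilibrium relation at `t + iη`. Since `√(z - 1) √(z + 1)`
tends to `i √(1 - t²)`, the imaginary part of the transform of `ρ` contributes `-π √(1 - t²) ρ(t)`.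
The real part of that transform may diverge when `ρ` is merely continuous, but it is `o(1 / η)` and
is multiplied by the real part of the root, which is `O(η)` because the square `z² - 1` of the root
has imaginary part `2tη`.
-/

open scoped Topology

section ApproximateIdentity

/-- The kernel `K` recentred at `t` and dilated to scale `ε`, normalised so that for `0 < ε` its
integral is that of `K`. -/
noncomputable def rescaledKernel (K : ℝ → ℝ) (t ε x : ℝ) : ℝ := ε⁻¹ * K ((x - t) / ε)

lemma tendsto_abs_mul_inv_one_add_sq_cobounded :
    Tendsto (fun v : ℝ => |v| * (1 + v ^ 2)⁻¹) (Bornology.cobounded ℝ) (𝓝 0) := by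
  refine squeeze_zero (fun v => by positivity) (fun v => ?_)
    (tendsto_inv_atTop_zero.comp tendsto_norm_cobounded_atTop)
  rcases eq_or_ne v 0 with rfl | hv
  · simp
  · rw [Function.comp_apply, Real.norm_eq_abs, ← div_eq_mul_inv, div_le_iff₀ (by positivity),
      inv_mul_eq_div, le_div_iff₀ (abs_pos.2 hv), ← sq, sq_abs]
    linarith

variable {E : Type*} [NormedAddCommGroup E] [NormedSpace ℝ E] {K : ℝ → ℝ} {f : ℝ → E} {C t : ℝ}

lemma integrable_of_abs_le_inv_one_add_sq (hK : Measurable K)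
    (hKC : ∀ v, |K v| ≤ C * (1 + v ^ 2)⁻¹) : Integrable K :=
  (integrable_inv_one_add_sq.const_mul C).mono' hK.aestronglyMeasurable (.of_forall hKC)

lemma abs_le_of_abs_le_inv_one_add_sq (hKC : ∀ v, |K v| ≤ C * (1 + v ^ 2)⁻¹) (v : ℝ) :
    |K v| ≤ C := by
  have hC : 0 ≤ C := by simpa using (abs_nonneg _).trans (hKC 0)
  exact (hKC v).trans (mul_le_of_le_one_right hC (inv_le_one_of_one_le₀ (by nlinarith)))

lemma integrable_rescaledKernel_smul (hK : Measurable K) (hKC : ∀ v, |K v| ≤ C)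
    (hf : Integrable f) (ε : ℝ) : Integrable fun x => rescaledKernel K t ε x • f x := by
  refine hf.bdd_smul (|ε⁻¹| * C) ?_ (.of_forall fun x => ?_)
  · unfold rescaledKernel
    exact Measurable.aestronglyMeasurable (by fun_prop)
  · rw [rescaledKernel, Real.norm_eq_abs, abs_mul]
    exact mul_le_mul_of_nonneg_left (hKC _) (abs_nonneg _)

lemma tendsto_integral_rescaledKernel_smul_of_nonneg [CompleteSpace E] (hK : ∀ v, 0 ≤ K v)
    (hKpos : 0 < ∫ v, K v) (hKC : ∀ v, |K v| ≤ C * (1 + v ^ 2)⁻¹) (hf : Integrable f)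
    (hft : ContinuousAt f t) :
    Tendsto (fun ε => ∫ x, rescaledKernel K t ε x • f x) (𝓝[>] 0) (𝓝 ((∫ v, K v) • f t)) := by
  set I := ∫ v, K v
  have hdecay : Tendsto (fun v => ‖v‖ ^ Module.finrank ℝ ℝ * (I⁻¹ * K (-v)))
      (Bornology.cobounded ℝ) (𝓝 0) := by
    refine squeeze_zero (fun v => by have := hK (-v); positivity) (fun v => ?_)
      (by simpa using tendsto_abs_mul_inv_one_add_sq_cobounded.const_mul (I⁻¹ * C))
    have hv : K (-v) ≤ C * (1 + v ^ 2)⁻¹ := by simpa using (le_abs_self _).trans (hKC (-v))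
    calc ‖v‖ ^ Module.finrank ℝ ℝ * (I⁻¹ * K (-v))
        ≤ |v| * (I⁻¹ * (C * (1 + v ^ 2)⁻¹)) := by
          rw [Module.finrank_self, pow_one, Real.norm_eq_abs]; gcongr
      _ = I⁻¹ * C * (|v| * (1 + v ^ 2)⁻¹) := by ring
  have hnormalised : ∫ v, I⁻¹ * K (-v) = 1 := by
    rw [integral_const_mul, integral_neg_eq_self, inv_mul_cancel₀ hKpos.ne']
  have hpeak := (tendsto_integral_comp_smul_smul_of_integrable'
    (fun v => mul_nonneg (inv_nonneg.2 hKpos.le) (hK (-v))) hnormalised hdecay hf hft).comp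
    tendsto_inv_nhdsGT_zero
  refine (hpeak.const_smul I).congr fun ε => ?_
  rw [Function.comp_apply, ← integral_smul]
  refine integral_congr_ae (.of_forall fun x => ?_)
  have harg : -(ε⁻¹ * (t - x)) = (x - t) / ε := by ring
  simp only [Module.finrank_self, pow_one, smul_eq_mul, rescaledKernel, smul_smul, harg]
  congr 1
  field_simp

lemma tendsto_integral_rescaledKernel_smul [CompleteSpace E] (hK : Measurable K)
    (hKC : ∀ v, |K v| ≤ C * (1 + v ^ 2)⁻¹) (hf : Integrable f) (hft : ContinuousAt f t) :
    Tendsto (fun ε => ∫ x, rescaledKernel K t ε x • f x) (𝓝[>] 0) (𝓝 ((∫ v, K v) • f t)) := by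
  -- The peak-function theorem needs positive kernels: write `K` as `(K + P) - P`.
  let P : ℝ → ℝ := fun v => (C + 1) * (1 + v ^ 2)⁻¹
  have hC : 0 ≤ C := by simpa using (abs_nonneg _).trans (hKC 0)
  have hPmeas : Measurable P := by fun_prop
  have hPint : Integrable P := integrable_inv_one_add_sq.const_mul _
  have hP (v : ℝ) : 0 < P v := by positivity
  have hPC (v : ℝ) : |P v| ≤ (C + 1) * (1 + v ^ 2)⁻¹ := (abs_of_pos (hP v)).le
  have hKP (v : ℝ) : (1 + v ^ 2)⁻¹ ≤ K v + P v := by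
    simp only [P]
    linarith [neg_le_of_abs_le (hKC v)]
  have hKPC (v : ℝ) : |K v + P v| ≤ (C + (C + 1)) * (1 + v ^ 2)⁻¹ :=
    (abs_add_le _ _).trans ((add_le_add (hKC v) (hPC v)).trans_eq (add_mul _ _ _).symm)
  have hKint := integrable_of_abs_le_inv_one_add_sq hK hKC
  have hPpos : 0 < ∫ v, P v := by
    rw [integral_const_mul, integral_univ_inv_one_add_sq]; positivity
  have hKPpos : 0 < ∫ v, (K v + P v) :=
    (integral_univ_inv_one_add_sq ▸ Real.pi_pos).trans_le
      (integral_mono integrable_inv_one_add_sq (hKint.add hPint) hKP)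
  have hlim := (tendsto_integral_rescaledKernel_smul_of_nonneg
    (fun v => (by positivity : (0 : ℝ) ≤ (1 + v ^ 2)⁻¹).trans (hKP v)) hKPpos hKPC hf hft).sub
    (tendsto_integral_rescaledKernel_smul_of_nonneg (fun v => (hP v).le) hPpos hPC hf hft)
  rw [← sub_smul, integral_add hKint hPint, add_sub_cancel_right] at hlim
  refine hlim.congr fun ε => ?_
  rw [← integral_sub (integrable_rescaledKernel_smul (by fun_prop)
      (abs_le_of_abs_le_inv_one_add_sq hKPC) hf ε)
    (integrable_rescaledKernel_smul hPmeas (abs_le_of_abs_le_inv_one_add_sq hPC) hf ε)]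
  simp only [rescaledKernel, ← sub_smul, mul_add, add_sub_cancel_right]

end ApproximateIdentity

section SquareRoot

open Complex

lemma continuousOn_cpow_const_im_nonneg {c : ℂ} (hc : 0 < c.re) :
    ContinuousOn (fun z : ℂ => z ^ c) {z | 0 ≤ z.im} := by
  intro z _
  by_cases hz : 0 ≤ z.re ∨ z.im ≠ 0
  · exact (continuousAt_cpow_const_of_re_pos hz hc).continuousWithinAt
  · push Not at hz
    have hz0 : z ≠ 0 := fun h => by simp [h] at hz
    have hlog := continuousWithinAt_log_of_re_neg_of_im_zero hz.1 hz.2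
    refine (hlog.mul_const c).cexp.congr_of_eventuallyEq ?_ (cpow_def_of_ne_zero hz0 c)
    filter_upwards [nhdsWithin_le_nhds (isOpen_ne.mem_nhds hz0)] with w hw
    exact cpow_def_of_ne_zero hw c

/-- The branch `√(z - 1) √(z + 1)` of the square root of `z ^ 2 - 1`, with principal roots, whose
only cut is `[-1, 1]`. -/
noncomputable def sqrtSqSubOne (z : ℂ) : ℂ := (z - 1) ^ ((1 : ℂ) / 2) * (z + 1) ^ ((1 : ℂ) / 2)

lemma sqrtSqSubOne_sq (z : ℂ) : sqrtSqSubOne z ^ 2 = z ^ 2 - 1 := by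
  have hsq (w : ℂ) : (w ^ ((1 : ℂ) / 2)) ^ 2 = w := by
    simp
  rw [sqrtSqSubOne, mul_pow, hsq, hsq]
  ring

lemma re_mul_im_sqrtSqSubOne (z : ℂ) :
    (sqrtSqSubOne z).re * (sqrtSqSubOne z).im = z.re * z.im := by
  have him := congrArg im (sqrtSqSubOne_sq z)
  simp only [sq, mul_im, sub_im, one_im] at him
  linarith

lemma continuousOn_sqrtSqSubOne : ContinuousOn sqrtSqSubOne {z | 0 ≤ z.im} := by
  have hcpow := continuousOn_cpow_const_im_nonneg (c := 1 / 2) (by norm_num)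
  refine (hcpow.comp (f := fun z => z - 1) (by fun_prop) fun z hz => ?_).mul
    (hcpow.comp (f := fun z => z + 1) (by fun_prop) fun z hz => ?_)
  all_goals simpa using hz

lemma sqrtSqSubOne_ofReal {t : ℝ} (ht : t ∈ Icc (-1 : ℝ) 1) :
    sqrtSqSubOne t = √(1 - t ^ 2) * I := by
  obtain ⟨ht₁, ht₂⟩ := ht
  have hsqrt {s : ℝ} (hs : 0 ≤ s) : (s : ℂ) ^ ((1 : ℂ) / 2) = √s := by
    rw [Real.sqrt_eq_rpow, ofReal_cpow hs]; norm_num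
  have hleft : ((t : ℂ) - 1) ^ ((1 : ℂ) / 2) = √(1 - t) * I := by
    have hneg := ofReal_cpow_of_nonpos (sub_nonpos.2 ht₂) (1 / 2)
    rw [← ofReal_neg, neg_sub, hsqrt (sub_nonneg.2 ht₂), mul_one_div, mul_div_right_comm,
      exp_pi_div_two_mul_I] at hneg
    exact_mod_cast hneg
  have hright : ((t : ℂ) + 1) ^ ((1 : ℂ) / 2) = √(1 + t) := by
    rw [← hsqrt (by linarith)]; push_cast; rw [add_comm]
  have hfactor : √(1 - t ^ 2) = √(1 - t) * √(1 + t) := by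
    rw [← Real.sqrt_mul (sub_nonneg.2 ht₂)]; ring_nf
  rw [sqrtSqSubOne, hleft, hright, hfactor]
  push_cast
  ring

end SquareRoot

section CauchyTransform

open Complex

/-- The Cauchy (Stieltjes) transform of the density `f`, in the sign convention with kernel
`1 / (x - z)`. -/
noncomputable def cauchyTransform (f : ℝ → ℝ) (z : ℂ) : ℂ := ∫ x, (f x : ℂ) / (x - z)

/-- The real part of `1 / (v - I)`, the conjugate Poisson kernel of the upper half-plane at height
one, up to the factor `π`. -/
noncomputable def conjugatePoissonKernel (v : ℝ) : ℝ := v * (1 + v ^ 2)⁻¹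

/-- The Cauchy kernel `1 / v` with the window `|v| < 1` removed; its rescalings are the kernels of
the truncated integrals that define the Cauchy principal value. -/
noncomputable def truncatedCauchyKernel (v : ℝ) : ℝ := if |v| < 1 then 0 else v⁻¹

variable {f : ℝ → ℝ} {z : ℂ} {s : Set ℝ} {t η : ℝ}

lemma cauchyTransform_indicator (hs : MeasurableSet s) :
    cauchyTransform (s.indicator f) z = ∫ x in s, (f x : ℂ) / (x - z) := by
  rw [cauchyTransform, ← integral_indicator hs]
  congr with x
  by_cases hx : x ∈ s <;> simp [hx]

lemma abs_im_le_norm_ofReal_sub (x : ℝ) (z : ℂ) : |z.im| ≤ ‖(x : ℂ) - z‖ := by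
  simpa using abs_im_le_norm ((x : ℂ) - z)

lemma ofReal_sub_ne_zero (hz : z.im ≠ 0) (x : ℝ) : (x : ℂ) - z ≠ 0 :=
  norm_pos_iff.1 ((abs_pos.2 hz).trans_le (abs_im_le_norm_ofReal_sub x z))

lemma integrable_ofReal_div_sub (hf : Integrable f) (hz : z.im ≠ 0) :
    Integrable fun x : ℝ => (f x : ℂ) / (x - z) := by
  refine hf.ofReal.mul_bdd (c := |z.im|⁻¹) (Measurable.aestronglyMeasurable (by fun_prop))
    (.of_forall fun x => ?_)
  rw [norm_inv]
  exact inv_anti₀ (abs_pos.2 hz) (abs_im_le_norm_ofReal_sub x z)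

lemma inv_ofReal_sub_add_mul_I (hη : η ≠ 0) (x : ℝ) :
    ((x : ℂ) - (t + η * I))⁻¹ = rescaledKernel conjugatePoissonKernel t η x +
      rescaledKernel (fun v => (1 + v ^ 2)⁻¹) t η x * I := by
  have hden : ((η ^ 2 + (x - t) ^ 2 : ℝ) : ℂ) ≠ 0 := ofReal_ne_zero.2 (by positivity)
  have hη' : (η : ℂ) ≠ 0 := ofReal_ne_zero.2 hη
  refine inv_eq_of_mul_eq_one_right ?_
  simp only [rescaledKernel, conjugatePoissonKernel]
  push_cast at hden ⊢
  field_simp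
  linear_combination (-(η : ℂ) ^ 2) * I_sq

lemma re_cauchyTransform (hf : Integrable f) (hη : η ≠ 0) :
    (cauchyTransform f (t + η * I)).re =
      ∫ x, rescaledKernel conjugatePoissonKernel t η x * f x := by
  rw [cauchyTransform, ← reCLM_apply,
    ← reCLM.integral_comp_comm (integrable_ofReal_div_sub hf (by simpa using hη))]
  congr with x
  rw [div_eq_mul_inv, inv_ofReal_sub_add_mul_I hη, reCLM_apply, re_ofReal_mul, mul_comm]
  simp

lemma im_cauchyTransform (hf : Integrable f) (hη : η ≠ 0) :
    (cauchyTransform f (t + η * I)).im =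
      ∫ x, rescaledKernel (fun v => (1 + v ^ 2)⁻¹) t η x * f x := by
  rw [cauchyTransform, ← imCLM_apply,
    ← imCLM.integral_comp_comm (integrable_ofReal_div_sub hf (by simpa using hη))]
  congr with x
  rw [div_eq_mul_inv, inv_ofReal_sub_add_mul_I hη, imCLM_apply, im_ofReal_mul, mul_comm]
  simp

lemma tendsto_im_cauchyTransform (hf : Integrable f) (hft : ContinuousAt f t) :
    Tendsto (fun η : ℝ => (cauchyTransform f (t + η * I)).im) (𝓝[>] 0) (𝓝 (Real.pi * f t)) := by
  have hlim := tendsto_integral_rescaledKernel_smul (K := fun v => (1 + v ^ 2)⁻¹) (C := 1)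
    (by fun_prop) (fun v => by rw [one_mul, abs_of_pos (by positivity)]) hf hft
  rw [integral_univ_inv_one_add_sq] at hlim
  refine hlim.congr' ?_
  filter_upwards [self_mem_nhdsWithin] with η hη
  exact (im_cauchyTransform hf (ne_of_gt hη)).symm

lemma tendsto_mul_cauchyTransform (hf : Integrable f) (t : ℝ) :
    Tendsto (fun η : ℝ => η * cauchyTransform f (t + η * I)) (𝓝[>] 0) (𝓝 0) := by
  simp only [cauchyTransform, ← integral_const_mul]
  rw [← integral_zero ℝ ℂ]
  refine tendsto_integral_filter_of_dominated_convergence (fun x => |f x|) ?_ ?_ hf.abs ?_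
  · exact .of_forall fun η => (hf.ofReal.aestronglyMeasurable.mul
      (Measurable.aestronglyMeasurable (by fun_prop))).const_mul _
  · filter_upwards with η
    filter_upwards with x
    have hη : |η| ≤ ‖(x : ℂ) - (t + η * I)‖ := by
      simpa using abs_im_le_norm_ofReal_sub x (t + η * I)
    rw [mul_div_left_comm, norm_mul, norm_div, norm_real, norm_real]
    exact mul_le_of_le_one_right (abs_nonneg _) (div_le_one_of_le₀ hη (norm_nonneg _))
  · filter_upwards [compl_mem_ae_iff.2 (measure_singleton t)] with x hx
    have hxt : (x : ℂ) - (t + (0 : ℝ) * I) ≠ 0 := by simpa [sub_eq_zero] using hx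
    have hcont : ContinuousAt (fun η : ℝ => (η : ℂ) * (f x / (x - (t + η * I)))) 0 := by
      fun_prop (disch := assumption)
    simpa using hcont.tendsto.mono_left nhdsWithin_le_nhds

lemma measurable_truncatedCauchyKernel : Measurable truncatedCauchyKernel :=
  .ite (measurableSet_lt (by fun_prop) (by fun_prop)) (by fun_prop) (by fun_prop)

lemma abs_truncatedCauchyKernel_sub_le (v : ℝ) :
    |truncatedCauchyKernel v - conjugatePoissonKernel v| ≤ 1 * (1 + v ^ 2)⁻¹ := by
  have hpos : 0 < (1 + v ^ 2)⁻¹ := by positivity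
  unfold truncatedCauchyKernel conjugatePoissonKernel
  split_ifs with hv
  · rw [zero_sub, abs_neg, abs_mul, abs_of_pos hpos]
    gcongr
  · rw [not_lt] at hv
    have hv₀ : v ≠ 0 := abs_pos.1 (one_pos.trans_le hv)
    have hsub : v⁻¹ - v * (1 + v ^ 2)⁻¹ = v⁻¹ * (1 + v ^ 2)⁻¹ := by field
    rw [hsub, abs_mul, abs_of_pos hpos, abs_inv]
    gcongr
    exact inv_le_one_of_one_le₀ hv

lemma integral_eq_zero_of_odd {G E : Type*} [MeasurableSpace G] [AddGroup G] [MeasurableNeg G]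
    [NormedAddCommGroup E] [NormedSpace ℝ E] {μ : Measure G} [μ.IsNegInvariant] {g : G → E}
    (hg : Function.Odd g) : ∫ x, g x ∂μ = 0 := by
  have hneg := integral_neg_eq_self g μ
  simp only [hg _, integral_neg] at hneg
  have : IsAddTorsionFree E := .of_isTorsionFree ℝ E
  exact self_eq_neg.1 hneg.symm

lemma odd_truncatedCauchyKernel_sub :
    (truncatedCauchyKernel - conjugatePoissonKernel).Odd := by
  intro v
  simp only [Pi.sub_apply, truncatedCauchyKernel, conjugatePoissonKernel, abs_neg, inv_neg, neg_sq]
  split_ifs <;> ring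

lemma integral_rescaledKernel_truncatedCauchyKernel (hη : 0 < η) :
    ∫ x, rescaledKernel truncatedCauchyKernel t η x * f x =
      ∫ x in (Ioo (t - η) (t + η))ᶜ, f x / (x - t) := by
  rw [← integral_indicator measurableSet_Ioo.compl]
  congr with x
  have hwindow : x ∈ Ioo (t - η) (t + η) ↔ |(x - t) / η| < 1 := by
    rw [abs_div, abs_of_pos hη, div_lt_one hη, abs_sub_lt_iff, mem_Ioo]
    constructor <;> rintro ⟨h₁, h₂⟩ <;> constructor <;> linarith
  by_cases hx : x ∈ Ioo (t - η) (t + η)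
  · simp [rescaledKernel, truncatedCauchyKernel, hx, hwindow.1 hx]
  · rw [indicator_of_mem hx, rescaledKernel, truncatedCauchyKernel, if_neg (hwindow.not.1 hx)]
    field

lemma measurable_conjugatePoissonKernel : Measurable conjugatePoissonKernel := by
  unfold conjugatePoissonKernel
  fun_prop

lemma abs_conjugatePoissonKernel_le_one (v : ℝ) : |conjugatePoissonKernel v| ≤ 1 := by
  have hpos : 0 < 1 + v ^ 2 := by positivity
  rw [conjugatePoissonKernel, abs_mul, abs_of_pos (inv_pos.2 hpos), ← div_eq_mul_inv,
    div_le_one hpos]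
  nlinarith [sq_abs v, sq_nonneg (|v| - 1)]

lemma abs_truncatedCauchyKernel_le_one (v : ℝ) : |truncatedCauchyKernel v| ≤ 1 := by
  rw [truncatedCauchyKernel]
  split_ifs with hv
  · simp
  · rw [abs_inv]
    exact inv_le_one_of_one_le₀ (not_lt.1 hv)

theorem tendsto_principalValue_sub_re_cauchyTransform (hf : Integrable f)
    (hft : ContinuousAt f t) :
    Tendsto (fun η : ℝ => (∫ x in (Ioo (t - η) (t + η))ᶜ, f x / (x - t)) -
      (cauchyTransform f (t + η * I)).re) (𝓝[>] 0) (𝓝 0) := by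
  have hlim := tendsto_integral_rescaledKernel_smul
    (measurable_truncatedCauchyKernel.sub measurable_conjugatePoissonKernel)
    abs_truncatedCauchyKernel_sub_le hf hft
  rw [integral_eq_zero_of_odd odd_truncatedCauchyKernel_sub, zero_smul] at hlim
  refine hlim.congr' ?_
  filter_upwards [self_mem_nhdsWithin] with η hη
  have hint {K : ℝ → ℝ} (hK : Measurable K) (hK₁ : ∀ v, |K v| ≤ 1) :
      Integrable fun x => rescaledKernel K t η x * f x :=
    integrable_rescaledKernel_smul hK hK₁ hf η
  rw [← integral_rescaledKernel_truncatedCauchyKernel hη, re_cauchyTransform hf (ne_of_gt hη),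
    ← integral_sub (hint measurable_truncatedCauchyKernel abs_truncatedCauchyKernel_le_one)
      (hint measurable_conjugatePoissonKernel abs_conjugatePoissonKernel_le_one)]
  simp only [rescaledKernel, smul_eq_mul, Pi.sub_apply, mul_sub, sub_mul]

end CauchyTransform

section Equilibrium

open Complex

variable {f ρ : ℝ → ℝ} {s : Set ℝ} {t : ℝ}

lemma continuousOn_deriv_mul_sqrt_one_sub_sq {V : ℝ → ℝ} {U : Set ℝ} (hU : IsOpen U)
    (hsU : s ⊆ U) (hV : ContDiffOn ℝ 1 V U) :
    ContinuousOn (fun x => deriv V x * √(1 - x ^ 2)) s :=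
  ((hV.continuousOn_deriv_of_isOpen hU le_rfl).mono hsU).mul (by fun_prop)

lemma continuousAt_indicator_of_mem_nhds (hs : s ∈ 𝓝 t) (hft : ContinuousAt f t) :
    ContinuousAt (s.indicator f) t :=
  hft.congr (eqOn_indicator.symm.eventuallyEq_of_mem hs)

lemma tendsto_sqrtSqSubOne (ht : t ∈ Icc (-1 : ℝ) 1) :
    Tendsto (fun η : ℝ => sqrtSqSubOne (t + η * I)) (𝓝[>] 0) (𝓝 (√(1 - t ^ 2) * I)) := by
  have hvertical : Tendsto (fun η : ℝ => (t + η * I : ℂ)) (𝓝[>] 0) (𝓝[{z | 0 ≤ z.im}] t) := by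
    refine tendsto_nhdsWithin_iff.2 ⟨?_, ?_⟩
    · have hcont : Continuous fun η : ℝ => (t + η * I : ℂ) := by fun_prop
      simpa using (hcont.tendsto 0).mono_left nhdsWithin_le_nhds
    · filter_upwards [self_mem_nhdsWithin] with η hη
      simpa using (mem_Ioi.1 hη).le
  rw [← sqrtSqSubOne_ofReal ht]
  exact (continuousOn_sqrtSqSubOne t (by simp)).tendsto.comp hvertical

lemma tendsto_re_sqrtSqSubOne_mul_cauchyTransform (ht : t ∈ Ioo (-1 : ℝ) 1) (hf : Integrable f)
    (hft : ContinuousAt f t) :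
    Tendsto (fun η : ℝ => (sqrtSqSubOne (t + η * I) * cauchyTransform f (t + η * I)).re) (𝓝[>] 0)
      (𝓝 (-(Real.pi * √(1 - t ^ 2) * f t))) := by
  have hroot : 0 < √(1 - t ^ 2) := Real.sqrt_pos.2 (by nlinarith [ht.1, ht.2])
  have him : Tendsto (fun η : ℝ => (sqrtSqSubOne (t + η * I)).im) (𝓝[>] 0)
      (𝓝 √(1 - t ^ 2)) := by
    simpa [Function.comp_def] using
      (continuous_im.tendsto _).comp (tendsto_sqrtSqSubOne (Ioo_subset_Icc_self ht))
  have hsmall : Tendsto (fun η : ℝ => η * (cauchyTransform f (t + η * I)).re) (𝓝[>] 0) (𝓝 0) := by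
    simpa [Function.comp_def] using
      (continuous_re.tendsto _).comp (tendsto_mul_cauchyTransform hf t)
  have hlim := ((hsmall.const_mul t).div him hroot.ne').sub
    (him.mul (tendsto_im_cauchyTransform hf hft))
  rw [mul_zero, zero_div, zero_sub, mul_left_comm, ← mul_assoc] at hlim
  refine hlim.congr' ?_
  filter_upwards [him.eventually_ne hroot.ne'] with η hη
  have hre : (sqrtSqSubOne (t + η * I)).re * (sqrtSqSubOne (t + η * I)).im = t * η := by
    simpa using re_mul_im_sqrtSqSubOne (t + η * I)
  rw [mul_re, sub_left_inj, Pi.div_apply, div_eq_iff hη]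
  linear_combination (-(cauchyTransform f (t + η * I)).re) * hre

lemma setIntegral_compl_indicator_div (hs : MeasurableSet s) (w : Set ℝ) :
    ∫ x in wᶜ, s.indicator f x / (x - t) = ∫ x in s \ w, f x / (x - t) := by
  rw [sdiff_eq_compl_inter, ← setIntegral_indicator hs]
  congr with x
  by_cases hx : x ∈ s <;> simp [hx]

lemma re_cauchyTransform_of_equilibrium {z : ℂ}
    (hz : 2 * (Real.pi : ℂ) * (z - 1) ^ ((1 : ℂ) / 2) * (z + 1) ^ ((1 : ℂ) / 2) *
        cauchyTransform ρ z + cauchyTransform f z = -2 * (Real.pi : ℂ)) :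
    (cauchyTransform f z).re =
      -2 * Real.pi - 2 * Real.pi * (sqrtSqSubOne z * cauchyTransform ρ z).re := by
  have hsolve : cauchyTransform f z =
      ((-2 * Real.pi : ℝ) : ℂ) - (2 * Real.pi : ℝ) * (sqrtSqSubOne z * cauchyTransform ρ z) := by
    rw [sqrtSqSubOne]
    push_cast
    linear_combination hz
  rw [hsolve, sub_re, ofReal_re, re_ofReal_mul]

/-- The function `f` stands for `V' x * √(1 - x ^ 2)`. -/
theorem pv_Vprime_eq_of_equilibrium_general (ht : t ∈ Ioo (-1 : ℝ) 1)
    (hf : IntegrableOn f (Ioo (-1 : ℝ) 1)) (hft : ContinuousAt f t)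
    (hρ : IntegrableOn ρ (Ioo (-1 : ℝ) 1)) (hρt : ContinuousAt ρ t)
    (heq : ∀ z : ℂ, 0 < z.im →
      2 * (Real.pi : ℂ) * (z - 1) ^ ((1 : ℂ) / 2) * (z + 1) ^ ((1 : ℂ) / 2) *
          (∫ x in Ioo (-1 : ℝ) 1, (ρ x : ℂ) / ((x : ℂ) - z))
        + (∫ x in Ioo (-1 : ℝ) 1, (f x : ℂ) / ((x : ℂ) - z)) = -2 * (Real.pi : ℂ)) :
    Tendsto (fun ε : ℝ => ∫ x in Ioo (-1 : ℝ) 1 \ Ioo (t - ε) (t + ε), f x / (x - t)) (𝓝[>] 0)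
      (𝓝 (-2 * Real.pi + 2 * Real.pi ^ 2 * √(1 - t ^ 2) * ρ t)) := by
  have hnhds : Ioo (-1 : ℝ) 1 ∈ 𝓝 t := Ioo_mem_nhds ht.1 ht.2
  have hpv := tendsto_principalValue_sub_re_cauchyTransform
    (hf.integrable_indicator measurableSet_Ioo) (continuousAt_indicator_of_mem_nhds hnhds hft)
  have hroot := tendsto_re_sqrtSqSubOne_mul_cauchyTransform ht
    (hρ.integrable_indicator measurableSet_Ioo) (continuousAt_indicator_of_mem_nhds hnhds hρt)
  have hlim := hpv.add ((hroot.const_mul (2 * Real.pi)).const_sub (-2 * Real.pi))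
  have hvalue : 0 + (-2 * Real.pi - 2 * Real.pi * -(Real.pi * √(1 - t ^ 2) * ρ t)) =
      -2 * Real.pi + 2 * Real.pi ^ 2 * √(1 - t ^ 2) * ρ t := by ring
  rw [indicator_of_mem ht, hvalue] at hlim
  refine hlim.congr' ?_
  filter_upwards [self_mem_nhdsWithin] with η hη
  have hre : (cauchyTransform ((Ioo (-1) 1).indicator f) (t + η * I)).re = _ :=
    re_cauchyTransform_of_equilibrium (ρ := (Ioo (-1) 1).indicator ρ) <| by
      simpa only [cauchyTransform_indicator measurableSet_Ioo] using
        heq (t + η * I) (by simpa using hη)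
  rw [← hre, sub_add_cancel, setIntegral_compl_indicator_div measurableSet_Ioo]

end Equilibrium

/-- If `ρ` is a continuous probability density on `[-1,1]` whose Stieltjes
transform satisfies the equilibrium relation
`2π √(z-1)√(z+1) ∫ ρ(x)/(x-z) dx + ∫ V'(x)√(1-x²)/(x-z) dx = -2π` for all
`z ∈ ℂ \ [-1,1]` (principal branches), then for every `t ∈ (-1,1)` the Cauchy
principal value `⨍ V'(x)√(1-x²)/(x-t) dx` equals `-2π + 2π² √(1-t²) ρ(t)`. -/
theorem pv_Vprime_eq_of_equilibrium (V ρ : ℝ → ℝ)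
    (hV : ∃ U : Set ℝ, IsOpen U ∧ Set.Icc (-1 : ℝ) 1 ⊆ U ∧ ContDiffOn ℝ 1 V U)
    (hρc : ContinuousOn ρ (Set.Icc (-1 : ℝ) 1))
    (hρ0 : ∀ x ∈ Set.Icc (-1 : ℝ) 1, 0 ≤ ρ x)
    (hρ1 : ∫ x in Set.Ioo (-1 : ℝ) 1, ρ x = 1)
    (heq : ∀ z : ℂ, z ∉ (Complex.ofReal '' Set.Icc (-1 : ℝ) 1) →
      2 * (Real.pi : ℂ) * (z - 1) ^ ((1 : ℂ) / 2) * (z + 1) ^ ((1 : ℂ) / 2) *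
          (∫ x in Set.Ioo (-1 : ℝ) 1, (ρ x : ℂ) / ((x : ℂ) - z))
        + (∫ x in Set.Ioo (-1 : ℝ) 1,
            ((deriv V x * Real.sqrt (1 - x ^ 2) : ℝ) : ℂ) / ((x : ℂ) - z))
        = -2 * (Real.pi : ℂ)) :
    ∀ t ∈ Set.Ioo (-1 : ℝ) 1,
      Tendsto
        (fun ε : ℝ =>
          ∫ x in Set.Ioo (-1 : ℝ) 1 \ Set.Ioo (t - ε) (t + ε),
            deriv V x * Real.sqrt (1 - x ^ 2) / (x - t))
        (nhdsWithin 0 (Set.Ioi 0))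
        (nhds (-2 * Real.pi + 2 * Real.pi ^ 2 * Real.sqrt (1 - t ^ 2) * ρ t)) := by
  intro t ht
  obtain ⟨U, hU, hIU, hVU⟩ := hV
  have hIcc : Icc (-1 : ℝ) 1 ∈ 𝓝 t := Icc_mem_nhds ht.1 ht.2
  have hf := continuousOn_deriv_mul_sqrt_one_sub_sq hU hIU hVU
  exact pv_Vprime_eq_of_equilibrium_general ht
    (hf.integrableOn_Icc.mono_set Ioo_subset_Icc_self) (hf.continuousAt hIcc)
    (hρc.integrableOn_Icc.mono_set Ioo_subset_Icc_self) (hρc.continuousAt hIcc)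
    fun z hz => heq z (by rintro ⟨x, -, rfl⟩; simp at hz)
end

section
/- Let V be real analytic in a neighborhood of [-1,1]. Then for every t in (-1,1): sqrt(1-t^2) · ⨍_{-1}^{1} V(x) / ((t-x) sqrt(1-x^2)) dx = ∫_{t}^{1} (1/sqrt(1-x^2)) · ( ⨍_{-1}^{1} V'(y) sqrt(1-y^2)/(y-x) dy ) dx, where ⨍ denotes the Cauchy principal value integral. -/
open MeasureTheory Filter Set

open scoped Topology Real

/-!
Put `q x y = (V y - V x) / (y - x)` and let `I x` be the integral of `q x y` in `y` against
`1 / √(1 - y²)` over `(-1, 1)`. Since `1 / ((t - x) √(1 - x²))` has principal value `0`, subtracting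
`V t` in the numerator gives `-I t` for the principal value on the left. In the same way, the inner
principal value on the right is the weighted integral in `y` of the divided difference of
`(1 - y²) V' y`. With `T x = √(1 - x²) ∂ₓ √(1 - x²)`, that divided difference equals
`(T x + T y) q`; the `T y` part is `√(1 - y²)` times a derivative and integrates to `0`, so the
inner principal value divided by `√(1 - x²)` is the derivative of `√(1 - x²) I x`. Integrating it
over `(t, 1)` gives `-√(1 - t²) I t`.
-/

section Extension

variable {E : Type*} [NormedAddCommGroup E] [NormedSpace ℝ E] [CompleteSpace E]

theorem exists_contDiff_eqOn_Icc {a b : ℝ} (hab : a < b) {n : ℕ} {f : ℝ → E}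
    (hf : ContDiffOn ℝ n f (Icc a b)) : ∃ g, ContDiff ℝ n g ∧ EqOn f g (Icc a b) := by
  have huniq := uniqueDiffOn_Icc hab
  induction n generalizing f with
  | zero =>
    refine ⟨IccExtend hab.le ((Icc a b).domRestrict f), ?_, fun x hx => ?_⟩
    · exact contDiff_zero.2 (hf.continuousOn.domRestrict.Icc_extend')
    · simp [IccExtend_of_mem _ _ hx]
  | succ n ih =>
    rw [Nat.cast_add_one] at hf ⊢
    obtain ⟨hdiff, -, hderiv⟩ := (contDiffOn_succ_iff_derivWithin huniq).1 hf
    obtain ⟨g', hg', hEq⟩ := ih hderiv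
    have hg (x : ℝ) : HasDerivAt (fun x => f a + ∫ s in a..x, g' s) (g' x) x :=
      (hg'.continuous.integral_hasStrictDerivAt a x).hasDerivAt.const_add (f a)
    refine ⟨_, contDiff_succ_iff_deriv.2
      ⟨fun x => (hg x).differentiableAt, by simp, by rwa [funext fun x => (hg x).deriv]⟩, ?_⟩
    refine eq_of_derivWithin_eq hdiff (fun x _ => (hg x).differentiableAt.differentiableWithinAt)
      (fun x hx => ?_) (by simp)
    have hx' := Ico_subset_Icc_self hx
    rw [hEq hx', (hg x).hasDerivWithinAt.derivWithin (huniq x hx')]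

end Extension

section ParametricIntegral

variable {E : Type*} [NormedAddCommGroup E] [NormedSpace ℝ E]

theorem hasDerivAt_intervalIntegral_of_continuous {F F' : ℝ → ℝ → E} (hF : ∀ x, Continuous (F x))
    (hF' : Continuous F'.uncurry) (hderiv : ∀ x s, HasDerivAt (F · s) (F' x s) x) (a b x : ℝ) :
    HasDerivAt (fun x => ∫ s in a..b, F x s) (∫ s in a..b, F' x s) x := by
  obtain ⟨C, hC⟩ := ((isCompact_closedBall x 1).prod
    (isCompact_uIcc (a := a) (b := b))).exists_bound_of_continuousOn hF'.continuousOn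
  exact (intervalIntegral.hasDerivAt_integral_of_dominated_loc_of_deriv_le (bound := fun _ => C)
    (Metric.closedBall_mem_nhds x one_pos)
    (.of_forall fun y => (hF y).aestronglyMeasurable)
    ((hF x).intervalIntegrable a b)
    (hF'.uncurry_left x).aestronglyMeasurable
    (.of_forall fun s hs y hy => hC (y, s) ⟨hy, uIoc_subset_uIcc hs⟩)
    intervalIntegrable_const
    (.of_forall fun s _ y _ => hderiv y s)).2

end ParametricIntegral

section DividedDifference

theorem dslope_comm {𝕜 E : Type*} [NontriviallyNormedField 𝕜] [NormedAddCommGroup E]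
    [NormedSpace 𝕜 E] (f : 𝕜 → E) (a b : 𝕜) : dslope f a b = dslope f b a := by
  obtain rfl | hab := eq_or_ne a b
  · rfl
  · rw [dslope_of_ne f hab.symm, dslope_of_ne f hab, slope_comm]

variable {E : Type*} [NormedAddCommGroup E] [NormedSpace ℝ E] [CompleteSpace E] {f : ℝ → E}

theorem dslope_eq_integral (hf : ContDiff ℝ 1 f) (a b : ℝ) :
    dslope f a b = ∫ s in (0 : ℝ)..1, deriv f (a + s * (b - a)) := by
  have : Continuous (deriv f) := hf.continuous_deriv_one
  obtain rfl | hab := eq_or_ne a b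
  · simp
  · have key : (b - a) • ∫ s in (0 : ℝ)..1, deriv f (a + s • (b - a)) = f (a + (b - a)) - f a :=
      intervalIntegral.integral_unitInterval_deriv_eq_sub (by fun_prop)
        fun s _ => (hf.differentiable_one _).hasDerivAt
    rw [add_sub_cancel, ← sub_smul_dslope] at key
    exact (smul_right_injective E (sub_ne_zero.2 hab.symm) key).symm

theorem continuous_uncurry_dslope (hf : ContDiff ℝ 1 f) : Continuous (dslope f).uncurry := by
  have : Continuous (deriv f) := hf.continuous_deriv_one
  have key : (dslope f).uncurry =
      fun p : ℝ × ℝ => ∫ s in (0 : ℝ)..1, deriv f (p.1 + s * (p.2 - p.1)) :=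
    funext fun p => dslope_eq_integral hf p.1 p.2
  rw [key]
  fun_prop

theorem hasDerivAt_dslope_left_integral (hf : ContDiff ℝ 2 f) (a b : ℝ) :
    HasDerivAt (fun x => dslope f x b)
      (∫ s in (0 : ℝ)..1, (1 - s) • deriv (deriv f) (a + s * (b - a))) a := by
  have hf' : ContDiff ℝ 1 (deriv f) := hf.deriv'
  have : Continuous (deriv f) := hf'.continuous
  have : Continuous (deriv (deriv f)) := hf'.continuous_deriv_one
  have hchain (x s : ℝ) : HasDerivAt (fun x => deriv f (x + s * (b - x)))
      ((1 - s) • deriv (deriv f) (x + s * (b - x))) x := by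
    have hinner : HasDerivAt (fun x => x + s * (b - x)) (1 - s) x :=
      ((hasDerivAt_id' x).add (((hasDerivAt_id' x).const_sub b).const_mul s)).congr_deriv (by ring)
    exact (hf'.differentiable_one _).hasDerivAt.scomp x hinner
  simp only [dslope_eq_integral (hf.of_le one_le_two)]
  exact hasDerivAt_intervalIntegral_of_continuous (fun x => by fun_prop) (by fun_prop) hchain 0 1 a

/-- The partial derivative of the divided difference `dslope f a b` in its base point `a`. -/
noncomputable def dslopeDeriv (f : ℝ → E) (a b : ℝ) : E := deriv (fun x => dslope f x b) a

theorem dslopeDeriv_eq_integral (hf : ContDiff ℝ 2 f) (a b : ℝ) :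
    dslopeDeriv f a b = ∫ s in (0 : ℝ)..1, (1 - s) • deriv (deriv f) (a + s * (b - a)) :=
  (hasDerivAt_dslope_left_integral hf a b).deriv

theorem hasDerivAt_dslope_left (hf : ContDiff ℝ 2 f) (a b : ℝ) :
    HasDerivAt (fun x => dslope f x b) (dslopeDeriv f a b) a :=
  (hasDerivAt_dslope_left_integral hf a b).differentiableAt.hasDerivAt

theorem continuous_uncurry_dslopeDeriv (hf : ContDiff ℝ 2 f) :
    Continuous (dslopeDeriv f).uncurry := by
  have : Continuous (deriv (deriv f)) := hf.deriv'.continuous_deriv_one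
  have key : (dslopeDeriv f).uncurry =
      fun p : ℝ × ℝ => ∫ s in (0 : ℝ)..1, (1 - s) • deriv (deriv f) (p.1 + s * (p.2 - p.1)) :=
    funext fun p => dslopeDeriv_eq_integral hf p.1 p.2
  rw [key]
  fun_prop

theorem dslopeDeriv_same (hf : ContDiff ℝ 2 f) (a : ℝ) :
    dslopeDeriv f a a = (1 / 2 : ℝ) • deriv (deriv f) a := by
  simp only [dslopeDeriv_eq_integral hf, sub_self, mul_zero, add_zero,
    intervalIntegral.integral_smul_const]
  rw [intervalIntegral.integral_sub (by simp) (by simp), intervalIntegral.integral_const,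
    integral_id]
  norm_num

theorem sub_smul_dslopeDeriv (hf : ContDiff ℝ 2 f) (a b : ℝ) :
    (b - a) • dslopeDeriv f a b = dslope f a b - deriv f a := by
  have hprod := ((hasDerivAt_id' a).const_sub b).smul (hasDerivAt_dslope_left hf a b)
  have hsub : HasDerivAt (fun x => f b - f x) (-deriv f a) a :=
    ((hf.differentiable two_ne_zero) a).hasDerivAt.const_sub (f b)
  have key := hprod.unique (hsub.congr_of_eventuallyEq (.of_forall fun x => sub_smul_dslope f x b))
  rw [neg_one_smul] at key
  rw [sub_eq_add_neg (dslope f a b), ← key]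
  abel

end DividedDifference

section PrincipalValue

variable {E : Type*} [NormedAddCommGroup E] [NormedSpace ℝ E] {f g : ℝ → E} {s : Set ℝ} {c : ℝ}
  {L M : E}

/-- `L` is the Cauchy principal value of the integral of `f` over `s` with a singularity at `c`:
the limit of the integrals over `s` with a symmetric interval around `c` removed. As for Bochner
integrals in general, the truncated integrals count as `0` where `f` is not integrable. -/
def HasPVIntegral (f : ℝ → E) (s : Set ℝ) (c : ℝ) (L : E) : Prop :=
  Tendsto (fun ε : ℝ => ∫ x in s \ Ioo (c - ε) (c + ε), f x) (𝓝[>] 0) (𝓝 L)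

namespace HasPVIntegral

theorem congr (hf : HasPVIntegral f s c L) (hs : MeasurableSet s) (hfg : EqOn f g (s \ {c})) :
    HasPVIntegral g s c L := by
  refine Tendsto.congr' ?_ hf
  filter_upwards [self_mem_nhdsWithin] with ε (hε : 0 < ε)
  refine setIntegral_congr_fun (hs.diff measurableSet_Ioo) fun x hx => hfg ⟨hx.1, ?_⟩
  rintro rfl
  exact hx.2 ⟨by linarith, by linarith⟩

theorem const_smul (hf : HasPVIntegral f s c L) (r : ℝ) :
    HasPVIntegral (fun x => r • f x) s c (r • L) := by
  simpa only [HasPVIntegral, integral_smul] using Tendsto.const_smul hf r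

theorem sub (hf : HasPVIntegral f s c L) (hg : HasPVIntegral g s c M)
    (hfi : ∀ ε > 0, IntegrableOn f (s \ Ioo (c - ε) (c + ε)))
    (hgi : ∀ ε > 0, IntegrableOn g (s \ Ioo (c - ε) (c + ε))) :
    HasPVIntegral (fun x => f x - g x) s c (L - M) := by
  refine (Tendsto.sub hf hg).congr' ?_
  filter_upwards [self_mem_nhdsWithin] with ε hε
  exact (integral_sub (hfi ε hε) (hgi ε hε)).symm

theorem neg (hf : HasPVIntegral f s c L) : HasPVIntegral (fun x => -f x) s c (-L) := by
  simpa only [HasPVIntegral, integral_neg] using Tendsto.neg hf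

theorem of_integrableOn (hf : IntegrableOn f s) (c : ℝ) :
    HasPVIntegral f s c (∫ x in s, f x) := by
  have hcover : AECover (volume.restrict s) (𝓝[>] (0 : ℝ)) fun ε => (Ioo (c - ε) (c + ε))ᶜ := by
    refine ⟨?_, fun ε => measurableSet_Ioo.compl⟩
    filter_upwards [Measure.ae_ne (volume.restrict s) c] with x hx
    filter_upwards [Ioo_mem_nhdsGT (abs_pos.2 (sub_ne_zero.2 hx))] with ε hε hmem
    exact hε.2.not_gt (abs_lt.2 ⟨by linarith [hmem.1], by linarith [hmem.2]⟩)
  refine (hcover.integral_tendsto_of_countably_generated hf).congr fun ε => ?_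
  rw [Measure.restrict_restrict measurableSet_Ioo.compl, inter_comm, sdiff_eq]

end HasPVIntegral

theorem Ioo_sdiff_Ioo_of_lt {α : Type*} [LinearOrder α] {a b c d : α}
    (hac : a < c) (hcd : c < d) (hdb : d < b) :
    Ioo a b \ Ioo c d = Ioc a c ∪ Ico d b := by
  ext x
  simp only [Set.mem_sdiff, mem_Ioo, mem_union, mem_Ioc, mem_Ico]
  grind

theorem hasPVIntegral_of_hasDerivAt [CompleteSpace E] {a b : ℝ} {F : ℝ → E} {l : E}
    (hc : c ∈ Ioo a b)
    (hcont : ContinuousOn F (Icc a b \ {c}))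
    (hderiv : ∀ x ∈ Ioo a b \ {c}, HasDerivAt F (f x) x)
    (hint : ∀ ε > 0, IntegrableOn f (Ioo a b \ Ioo (c - ε) (c + ε)))
    (hlim : Tendsto (fun ε => F (c - ε) - F (c + ε)) (𝓝[>] 0) (𝓝 l)) :
    HasPVIntegral f (Ioo a b) c (F b - F a + l) := by
  refine (hlim.const_add (F b - F a)).congr' ?_
  filter_upwards [Ioo_mem_nhdsGT (sub_pos.2 hc.1), Ioo_mem_nhdsGT (sub_pos.2 hc.2)]
    with ε ⟨hε, hεa⟩ ⟨_, hεb⟩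
  have hsplit : Ioo a b \ Ioo (c - ε) (c + ε) = Ioc a (c - ε) ∪ Ico (c + ε) b :=
    Ioo_sdiff_Ioo_of_lt (by linarith) (by linarith) (by linarith)
  have hdisj : Disjoint (Ioc a (c - ε)) (Ico (c + ε) b) :=
    disjoint_left.2 fun x hx hx' => by linarith [hx.2, hx'.1]
  obtain ⟨hleft, hright⟩ := integrableOn_union.1 (hsplit ▸ hint ε hε)
  have hFleft : ∫ x in Ioc a (c - ε), f x = F (c - ε) - F a := by
    rw [← intervalIntegral.integral_of_le (by linarith)]
    refine intervalIntegral.integral_eq_sub_of_hasDerivAt_of_le (by linarith)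
      (hcont.mono fun x hx => ⟨⟨hx.1, by linarith [hx.2]⟩, by grind⟩)
      (fun x hx => hderiv x ⟨⟨hx.1, by linarith [hx.2]⟩, by grind⟩) ?_
    rwa [intervalIntegrable_iff_integrableOn_Ioc_of_le (by linarith)]
  have hFright : ∫ x in Ico (c + ε) b, f x = F b - F (c + ε) := by
    rw [integral_Ico_eq_integral_Ioc, ← intervalIntegral.integral_of_le (by linarith)]
    refine intervalIntegral.integral_eq_sub_of_hasDerivAt_of_le (by linarith)
      (hcont.mono fun x hx => ⟨⟨by linarith [hx.1], hx.2⟩, by grind⟩)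
      (fun x hx => hderiv x ⟨⟨by linarith [hx.1], hx.2⟩, by grind⟩) ?_
    rwa [intervalIntegrable_iff_integrableOn_Ico_of_le (by linarith)]
  rw [hsplit, setIntegral_union hdisj measurableSet_Ico hleft hright, hFleft, hFright]
  abel

theorem integrableOn_inv_sub_smul_sdiff_Ioo (hf : IntegrableOn f s) (hs : MeasurableSet s) (c : ℝ)
    {ε : ℝ} (hε : 0 < ε) :
    IntegrableOn (fun x => (c - x)⁻¹ • f x) (s \ Ioo (c - ε) (c + ε)) := by
  refine (hf.mono_set sdiff_subset).bdd_smul ε⁻¹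
    (Measurable.aestronglyMeasurable (by fun_prop)) ?_
  refine (ae_restrict_iff' (hs.diff measurableSet_Ioo)).2 (.of_forall fun x hx => ?_)
  rw [norm_inv, Real.norm_eq_abs]
  refine inv_anti₀ hε ?_
  by_contra! hlt
  exact hx.2 ⟨by linarith [(abs_lt.1 hlt).2], by linarith [(abs_lt.1 hlt).1]⟩

end PrincipalValue

section ArcsineWeight

theorem integrableOn_div_sqrt_one_sub_sq {f : ℝ → ℝ} (hf : ContinuousOn f (Icc (-1) 1)) :
    IntegrableOn (fun x => f x / √(1 - x ^ 2)) (Ioo (-1) 1) := by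
  rw [← uIcc_of_le (by norm_num)] at hf
  have := Polynomial.Chebyshev.intervalIntegrable_sqrt_one_sub_sq_inv.continuousOn_mul hf
  rw [intervalIntegrable_iff_integrableOn_Ioo_of_le (by norm_num)] at this
  simpa only [Real.sqrt_inv, ← div_eq_mul_inv] using this

theorem integral_div_sqrt_one_sub_sq (f : ℝ → ℝ) :
    ∫ x in Ioo (-1) 1, f x / √(1 - x ^ 2) = ∫ θ in 0..π, f (Real.cos θ) := by
  rw [← Polynomial.Chebyshev.integral_measureT_eq_integral_cos,
    Polynomial.Chebyshev.integral_measureT, intervalIntegral.integral_of_le (by norm_num),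
    integral_Ioc_eq_integral_Ioo]
  simp only [Real.sqrt_inv, ← div_eq_mul_inv]

theorem one_sub_sq_pos {x : ℝ} (hx : x ∈ Ioo (-1) 1) : 0 < 1 - x ^ 2 := by
  nlinarith [hx.1, hx.2]

theorem hasDerivAt_sqrt_one_sub_sq {x : ℝ} (hx : x ∈ Ioo (-1) 1) :
    HasDerivAt (fun x => √(1 - x ^ 2)) (-x / √(1 - x ^ 2)) x := by
  have hinner : HasDerivAt (fun x : ℝ => 1 - x ^ 2) (-(2 * x)) x := by
    simpa using (hasDerivAt_pow 2 x).const_sub 1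
  exact (hinner.sqrt (one_sub_sq_pos hx).ne').congr_deriv (by field_simp)

/-- The numerator in the primitive of `1 / ((t - x) * √(1 - x ^ 2))`. With `t = cos φ` and
`x = cos θ` it is `1 - cos (φ + θ) = 2 sin² ((φ + θ) / 2)`, while
`t - x = 2 sin ((φ + θ) / 2) sin ((θ - φ) / 2)`. -/
noncomputable def cauchyNumerator (t x : ℝ) : ℝ := 1 - t * x + √(1 - t ^ 2) * √(1 - x ^ 2)

theorem cauchyNumerator_pos {t x : ℝ} (ht : t ∈ Ioo (-1) 1) (hx : x ∈ Icc (-1) 1) :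
    0 < cauchyNumerator t x := by
  have hmul : t * x < 1 := by
    nlinarith [sq_nonneg (t - x), one_sub_sq_pos ht, hx.1, hx.2]
  have : 0 ≤ √(1 - t ^ 2) * √(1 - x ^ 2) := by positivity
  rw [cauchyNumerator]
  linarith

/-- A primitive of `1 / ((t - x) * √(1 - x ^ 2))` on `[-1, 1] \ {t}`; with `t = cos φ` and
`x = cos θ` it is `log |sin ((φ + θ) / 2) / sin ((θ - φ) / 2)| / sin φ`. Recall that `Real.log x` is
`log |x|`. -/
noncomputable def cauchyPrimitive (t x : ℝ) : ℝ :=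
  (Real.log (cauchyNumerator t x) - Real.log (t - x)) / √(1 - t ^ 2)

theorem hasDerivAt_cauchyPrimitive {t x : ℝ} (ht : t ∈ Ioo (-1) 1) (hx : x ∈ Ioo (-1) 1)
    (hxt : x ≠ t) :
    HasDerivAt (cauchyPrimitive t) ((t - x)⁻¹ * (1 / √(1 - x ^ 2))) x := by
  have hsub : t - x ≠ 0 := sub_ne_zero.2 hxt.symm
  have hlin : HasDerivAt (fun x => 1 - t * x) (-t) x := by
    simpa using ((hasDerivAt_id' x).const_mul t).const_sub 1
  have hnum : HasDerivAt (cauchyNumerator t) (-t + √(1 - t ^ 2) * (-x / √(1 - x ^ 2))) x :=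
    hlin.add ((hasDerivAt_sqrt_one_sub_sq hx).const_mul _)
  have hpos := cauchyNumerator_pos ht (Ioo_subset_Icc_self hx)
  refine (((hnum.log hpos.ne').sub (((hasDerivAt_id' x).const_sub t).log hsub)).div_const
    _).congr_deriv ?_
  have hSt := Real.sqrt_pos.2 (one_sub_sq_pos ht)
  have hSx := Real.sqrt_pos.2 (one_sub_sq_pos hx)
  have hSt2 := Real.sq_sqrt (one_sub_sq_pos ht).le
  have hSx2 := Real.sq_sqrt (one_sub_sq_pos hx).le
  unfold cauchyNumerator at hpos ⊢
  generalize √(1 - t ^ 2) = S at *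
  generalize √(1 - x ^ 2) = R at *
  field_simp
  linear_combination S * hSx2 - R * hSt2

theorem hasPVIntegral_inv_sub_mul_inv_sqrt {t : ℝ} (ht : t ∈ Ioo (-1) 1) :
    HasPVIntegral (fun x => (t - x)⁻¹ * (1 / √(1 - x ^ 2))) (Ioo (-1) 1) t 0 := by
  have hcont : Continuous (cauchyNumerator t) := by unfold cauchyNumerator; fun_prop
  have hlim : Tendsto (fun ε => cauchyPrimitive t (t - ε) - cauchyPrimitive t (t + ε))
      (𝓝[>] 0) (𝓝 0) := by
    have hne : cauchyNumerator t t ≠ 0 := (cauchyNumerator_pos ht (Ioo_subset_Icc_self ht)).ne'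
    have hlog : ContinuousAt (fun ε => (Real.log (cauchyNumerator t (t - ε))
        - Real.log (cauchyNumerator t (t + ε))) / √(1 - t ^ 2)) 0 :=
      ((ContinuousAt.log (by fun_prop) (by simpa)).sub
        (ContinuousAt.log (by fun_prop) (by simpa))).div_const _
    have hzero := hlog.tendsto.mono_left (nhdsWithin_le_nhds (s := Ioi 0))
    simp only [sub_zero, add_zero, sub_self, zero_div] at hzero
    refine hzero.congr fun ε => ?_
    simp only [cauchyPrimitive, sub_sub_cancel, sub_add_cancel_left, Real.log_neg_eq_log]
    ring
  have hends : cauchyPrimitive t 1 - cauchyPrimitive t (-1) = 0 := by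
    have hlog : Real.log (t - 1) = Real.log (1 - t) := by rw [← neg_sub, Real.log_neg_eq_log]
    simp [cauchyPrimitive, cauchyNumerator, hlog, add_comm]
  rw [← hends, ← add_zero (cauchyPrimitive t 1 - _)]
  refine hasPVIntegral_of_hasDerivAt ht ?_ (fun x hx => hasDerivAt_cauchyPrimitive ht hx.1 hx.2)
    (fun ε hε => integrableOn_inv_sub_smul_sdiff_Ioo
      (integrableOn_div_sqrt_one_sub_sq continuousOn_const) measurableSet_Ioo t hε) hlim
  refine ((hcont.continuousOn.log fun x hx => (cauchyNumerator_pos ht hx.1).ne').sub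
    (ContinuousOn.log (by fun_prop) fun x hx => ?_)).div_const _
  exact sub_ne_zero.2 (Ne.symm hx.2)

theorem hasPVIntegral_div_sub_mul_sqrt {f : ℝ → ℝ} {t : ℝ} (ht : t ∈ Ioo (-1) 1)
    (hf : ContinuousOn f (Icc (-1) 1)) (hft : DifferentiableAt ℝ f t) :
    HasPVIntegral (fun x => f x / ((t - x) * √(1 - x ^ 2))) (Ioo (-1) 1) t
      (-∫ θ in 0..π, dslope f t (Real.cos θ)) := by
  have hslope : IntegrableOn (fun x => dslope f t x / √(1 - x ^ 2)) (Ioo (-1) 1) :=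
    integrableOn_div_sqrt_one_sub_sq
      ((continuousOn_dslope (Icc_mem_nhds ht.1 ht.2)).2 ⟨hf, hft⟩)
  have hkernel (ε : ℝ) (hε : ε > 0) : IntegrableOn (fun x => f t • ((t - x)⁻¹ * (1 / √(1 - x ^ 2))))
      (Ioo (-1) 1 \ Ioo (t - ε) (t + ε)) :=
    (integrableOn_inv_sub_smul_sdiff_Ioo
      (integrableOn_div_sqrt_one_sub_sq continuousOn_const) measurableSet_Ioo t hε).const_mul (f t)
  have key := ((hasPVIntegral_inv_sub_mul_inv_sqrt ht).const_smul (f t)).sub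
    (.of_integrableOn hslope t) hkernel fun ε _ => hslope.mono_set sdiff_subset
  rw [smul_zero, zero_sub, integral_div_sqrt_one_sub_sq] at key
  refine key.congr measurableSet_Ioo fun x hx => ?_
  have hsub : t - x ≠ 0 := sub_ne_zero.2 (Ne.symm hx.2)
  have hsqrt := Real.sqrt_pos.2 (one_sub_sq_pos hx.1)
  have hfx : f x = f t + (x - t) * dslope f t x := by rw [← smul_eq_mul, sub_smul_dslope]; ring
  simp only [hfx, smul_eq_mul]
  field_simp
  ring

theorem hasPVIntegral_mul_sqrt_div_sub {f : ℝ → ℝ} {x : ℝ} (hx : x ∈ Ioo (-1) 1)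
    (hf : ContinuousOn f (Icc (-1) 1)) (hfx : DifferentiableAt ℝ f x) :
    HasPVIntegral (fun y => f y * √(1 - y ^ 2) / (y - x)) (Ioo (-1) 1) x
      (∫ θ in 0..π, dslope (fun y => (1 - y ^ 2) * f y) x (Real.cos θ)) := by
  have key := (hasPVIntegral_div_sub_mul_sqrt (f := fun y => (1 - y ^ 2) * f y) hx
    (by fun_prop) (by fun_prop)).neg
  rw [neg_neg] at key
  refine key.congr measurableSet_Ioo fun y hy => ?_
  have hsub : y - x ≠ 0 := sub_ne_zero.2 hy.2
  have hsqrt := Real.sqrt_pos.2 (one_sub_sq_pos hy.1)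
  have hsq := Real.sq_sqrt (one_sub_sq_pos hy.1).le
  simp only [← neg_sub y x]
  field_simp
  rw [hsq, mul_comm]

theorem integral_Ioo_weighted_deriv_div_sqrt {f : ℝ → ℝ} (hf : ContDiff ℝ 1 f) {t : ℝ}
    (ht : t ∈ Icc (-1) 1) :
    ∫ x in Ioo t 1, ((1 - x ^ 2) * deriv f x - x * f x) / √(1 - x ^ 2) = -(√(1 - t ^ 2) * f t) := by
  have : Continuous (deriv f) := hf.continuous_deriv_one
  have hcont : Continuous f := hf.continuous
  have hint : IntegrableOn (fun x => ((1 - x ^ 2) * deriv f x - x * f x) / √(1 - x ^ 2))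
      (Ioo t 1) :=
    (integrableOn_div_sqrt_one_sub_sq (by fun_prop)).mono_set (Ioo_subset_Ioo_left ht.1)
  rw [← integral_Ioc_eq_integral_Ioo, ← intervalIntegral.integral_of_le ht.2,
    intervalIntegral.integral_eq_sub_of_hasDerivAt_of_le
      (f := fun x => √(1 - x ^ 2) * f x) ht.2 (by fun_prop) (fun x hx => ?_)
      ((intervalIntegrable_iff_integrableOn_Ioo_of_le ht.2).2 hint)]
  · simp
  · have hx' : x ∈ Ioo (-1) 1 := ⟨ht.1.trans_lt hx.1, hx.2⟩
    have hsqrt := Real.sqrt_pos.2 (one_sub_sq_pos hx')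
    refine ((hasDerivAt_sqrt_one_sub_sq hx').mul
      (hf.differentiable_one x).hasDerivAt).congr_deriv ?_
    have hsq := Real.sq_sqrt (one_sub_sq_pos hx').le
    field_simp
    rw [hsq]
    ring

end ArcsineWeight

section DividedDifferenceArcsine

variable {f : ℝ → ℝ}

/-- The operator `√(1 - x²) ∂ₓ √(1 - x²)` applied to the divided difference `dslope f x y` in its
base point `x`. -/
noncomputable def weightedDslopeDeriv (f : ℝ → ℝ) (x y : ℝ) : ℝ :=
  (1 - x ^ 2) * dslopeDeriv f x y - x * dslope f x y

theorem continuous_uncurry_weightedDslopeDeriv (hf : ContDiff ℝ 2 f) :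
    Continuous (weightedDslopeDeriv f).uncurry := by
  have hslope := continuous_uncurry_dslope (hf.of_le one_le_two)
  have hderiv := continuous_uncurry_dslopeDeriv hf
  exact ((continuous_const.sub (continuous_fst.pow 2)).mul hderiv).sub (continuous_fst.mul hslope)

theorem dslope_one_sub_sq_mul_deriv (hf : ContDiff ℝ 2 f) (x y : ℝ) :
    dslope (fun y => (1 - y ^ 2) * deriv f y) x y =
      weightedDslopeDeriv f x y + weightedDslopeDeriv f y x := by
  obtain rfl | hxy := eq_or_ne x y
  · have hsq : HasDerivAt (fun y : ℝ => 1 - y ^ 2) (-(2 * x)) x := by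
      simpa using (hasDerivAt_pow 2 x).const_sub 1
    have hprod := hsq.mul (hf.deriv'.differentiable_one x).hasDerivAt
    rw [dslope_same, weightedDslopeDeriv, dslopeDeriv_same hf, dslope_same, smul_eq_mul]
    exact hprod.deriv.trans (by ring)
  · have hsub := sub_ne_zero.2 hxy.symm
    have hleft := sub_smul_dslopeDeriv hf x y
    have hright := sub_smul_dslopeDeriv hf y x
    have hdiag := sub_smul_dslope (fun y => (1 - y ^ 2) * deriv f y) x y
    rw [dslope_comm f y x] at hright
    refine mul_left_cancel₀ hsub ?_
    simp only [smul_eq_mul, weightedDslopeDeriv, dslope_comm f y x] at *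
    linear_combination hdiag - (1 - x ^ 2) * hleft + (1 - y ^ 2) * hright

theorem integral_weightedDslopeDeriv_cos_left (hf : ContDiff ℝ 2 f) (y : ℝ) :
    ∫ θ in 0..π, weightedDslopeDeriv f (Real.cos θ) y = 0 := by
  have hcont : Continuous fun θ => weightedDslopeDeriv f (Real.cos θ) y :=
    (continuous_uncurry_weightedDslopeDeriv hf).comp₂ Real.continuous_cos continuous_const
  rw [intervalIntegral.integral_eq_sub_of_hasDerivAt
    (f := fun θ => -(dslope f (Real.cos θ) y * Real.sin θ)) (fun θ _ => ?_)
    (hcont.intervalIntegrable _ _)]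
  · simp
  · refine (((hasDerivAt_dslope_left hf (Real.cos θ) y).comp θ (Real.hasDerivAt_cos θ)).mul
      (Real.hasDerivAt_sin θ)).neg.congr_deriv ?_
    simp only [weightedDslopeDeriv, Function.comp_apply]
    linear_combination dslopeDeriv f (Real.cos θ) y * Real.sin_sq_add_cos_sq θ

/-- The integral of the divided difference `dslope f x y` in `y` against the arcsine weight
`1 / √(1 - y²)` on `(-1, 1)`, in the variable `y = cos θ`. -/
noncomputable def arcsineDslope (f : ℝ → ℝ) (x : ℝ) : ℝ := ∫ θ in 0..π, dslope f x (Real.cos θ)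

theorem continuous_uncurry_dslopeDeriv_cos (hf : ContDiff ℝ 2 f) :
    Continuous fun p : ℝ × ℝ => dslopeDeriv f p.1 (Real.cos p.2) :=
  (continuous_uncurry_dslopeDeriv hf).comp₂ continuous_fst (by fun_prop)

theorem hasDerivAt_arcsineDslope (hf : ContDiff ℝ 2 f) (x : ℝ) :
    HasDerivAt (arcsineDslope f) (∫ θ in 0..π, dslopeDeriv f x (Real.cos θ)) x :=
  hasDerivAt_intervalIntegral_of_continuous (F := fun x θ => dslope f x (Real.cos θ))
    (F' := fun x θ => dslopeDeriv f x (Real.cos θ))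
    (fun _ => (continuous_uncurry_dslope (hf.of_le one_le_two)).comp₂ continuous_const
      Real.continuous_cos)
    (continuous_uncurry_dslopeDeriv_cos hf)
    (fun x θ => hasDerivAt_dslope_left hf x (Real.cos θ)) 0 π x

theorem contDiff_arcsineDslope (hf : ContDiff ℝ 2 f) : ContDiff ℝ 1 (arcsineDslope f) := by
  refine contDiff_one_iff_deriv.2 ⟨fun x => (hasDerivAt_arcsineDslope hf x).differentiableAt, ?_⟩
  rw [funext fun x => (hasDerivAt_arcsineDslope hf x).deriv]
  exact intervalIntegral.continuous_parametric_intervalIntegral_of_continuous'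
    (continuous_uncurry_dslopeDeriv_cos hf) 0 π

theorem integral_weightedDslopeDeriv_cos_right (hf : ContDiff ℝ 2 f) (x : ℝ) :
    ∫ θ in 0..π, weightedDslopeDeriv f x (Real.cos θ) =
      (1 - x ^ 2) * deriv (arcsineDslope f) x - x * arcsineDslope f x := by
  have hslope : Continuous fun θ => dslope f x (Real.cos θ) :=
    (continuous_uncurry_dslope (hf.of_le one_le_two)).comp₂ continuous_const Real.continuous_cos
  have hderiv : Continuous fun θ => dslopeDeriv f x (Real.cos θ) :=
    (continuous_uncurry_dslopeDeriv hf).comp₂ continuous_const Real.continuous_cos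
  simp only [weightedDslopeDeriv]
  rw [intervalIntegral.integral_sub ((hderiv.const_mul _).intervalIntegrable _ _)
      ((hslope.const_mul _).intervalIntegrable _ _),
    intervalIntegral.integral_const_mul, intervalIntegral.integral_const_mul,
    (hasDerivAt_arcsineDslope hf x).deriv, arcsineDslope]

theorem integral_dslope_one_sub_sq_mul_deriv (hf : ContDiff ℝ 2 f) (x : ℝ) :
    ∫ θ in 0..π, dslope (fun y => (1 - y ^ 2) * deriv f y) x (Real.cos θ) =
      (1 - x ^ 2) * deriv (arcsineDslope f) x - x * arcsineDslope f x := by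
  have hleft : Continuous fun θ => weightedDslopeDeriv f (Real.cos θ) x :=
    (continuous_uncurry_weightedDslopeDeriv hf).comp₂ Real.continuous_cos continuous_const
  have hright : Continuous fun θ => weightedDslopeDeriv f x (Real.cos θ) :=
    (continuous_uncurry_weightedDslopeDeriv hf).comp₂ continuous_const Real.continuous_cos
  simp only [dslope_one_sub_sq_mul_deriv hf]
  rw [intervalIntegral.integral_add (hright.intervalIntegrable _ _) (hleft.intervalIntegrable _ _),
    integral_weightedDslopeDeriv_cos_left hf, add_zero, integral_weightedDslopeDeriv_cos_right hf]

theorem pv_identity_V_general (V : ℝ → ℝ) (hV : ContDiffOn ℝ 2 V (Icc (-1) 1)) (t : ℝ)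
    (ht : t ∈ Ioo (-1 : ℝ) 1) :
    ∃ (L : ℝ) (g : ℝ → ℝ),
      HasPVIntegral (fun x => V x / ((t - x) * √(1 - x ^ 2))) (Ioo (-1) 1) t L ∧
      (∀ x ∈ Ioo (-1 : ℝ) 1,
        HasPVIntegral (fun y => deriv V y * √(1 - y ^ 2) / (y - x)) (Ioo (-1) 1) x (g x)) ∧
      √(1 - t ^ 2) * L = ∫ x in Ioo t 1, g x / √(1 - x ^ 2) := by
  obtain ⟨W, hW, hVW⟩ : ∃ W, ContDiff ℝ 2 W ∧ EqOn V W (Icc (-1) 1) :=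
    exists_contDiff_eqOn_Icc (by norm_num) hV
  have hderiv : EqOn (deriv W) (deriv V) (Ioo (-1) 1) :=
    (hVW.mono Ioo_subset_Icc_self).symm.deriv isOpen_Ioo
  have hW' : ContDiff ℝ 1 (deriv W) := hW.deriv'
  refine ⟨-arcsineDslope W t,
    fun x => (1 - x ^ 2) * deriv (arcsineDslope W) x - x * arcsineDslope W x,
    ?_, fun x hx => ?_, ?_⟩
  · refine (hasPVIntegral_div_sub_mul_sqrt ht hW.continuous.continuousOn
      (hW.differentiable two_ne_zero t)).congr measurableSet_Ioo fun x hx => ?_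
    rw [hVW (Ioo_subset_Icc_self hx.1)]
  · simp only [← integral_dslope_one_sub_sq_mul_deriv hW]
    refine (hasPVIntegral_mul_sqrt_div_sub hx hW'.continuous.continuousOn
      (hW'.differentiable_one x)).congr measurableSet_Ioo fun y hy => ?_
    simp only [hderiv hy.1]
  · rw [integral_Ioo_weighted_deriv_div_sqrt (contDiff_arcsineDslope hW)
      (Ioo_subset_Icc_self ht), mul_neg]

end DividedDifferenceArcsine

/-- For `V` real analytic in a neighborhood of `[-1,1]` and `t ∈ (-1,1)`,
`√(1-t²) ⨍ V(x)/((t-x)√(1-x²)) dx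
  = ∫_t^1 (1/√(1-x²)) ( ⨍ V'(y)√(1-y²)/(y-x) dy ) dx`,
where `⨍` denotes the Cauchy principal value: both principal values exist (with
the inner one defining a function `g`), and the stated equality holds. -/
theorem pv_identity_V (V : ℝ → ℝ)
    (hV : ∃ U : Set ℝ, IsOpen U ∧ Set.Icc (-1 : ℝ) 1 ⊆ U ∧ AnalyticOnNhd ℝ V U)
    (t : ℝ) (ht : t ∈ Set.Ioo (-1 : ℝ) 1) :
    ∃ (L : ℝ) (g : ℝ → ℝ),
      Tendsto
        (fun ε : ℝ =>
          ∫ x in Set.Ioo (-1 : ℝ) 1 \ Set.Ioo (t - ε) (t + ε),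
            V x / ((t - x) * Real.sqrt (1 - x ^ 2)))
        (nhdsWithin 0 (Set.Ioi 0)) (nhds L) ∧
      (∀ x ∈ Set.Ioo (-1 : ℝ) 1,
        Tendsto
          (fun ε : ℝ =>
            ∫ y in Set.Ioo (-1 : ℝ) 1 \ Set.Ioo (x - ε) (x + ε),
              deriv V y * Real.sqrt (1 - y ^ 2) / (y - x))
          (nhdsWithin 0 (Set.Ioi 0)) (nhds (g x))) ∧
      Real.sqrt (1 - t ^ 2) * L
        = ∫ x in Set.Ioo t 1, g x / Real.sqrt (1 - x ^ 2) := by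
  obtain ⟨U, -, hU, hVU⟩ := hV
  exact pv_identity_V_general V ((hVU.mono hU).contDiffOn (uniqueDiffOn_Icc (by norm_num))) t ht
end
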